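/- Assume (H1)–(H4). Let y be a solution of (E) belonging to the class S₂ = {y > 0, L₁y < 0, L₂y > 0, L₃y < 0} on [t₁, ∞) for some t₁ ≥ t₀. If ∫_{t₀}^∞ q(s)·π(σ(s))^γ ds = ∞, then for every constant k > 0 there exists t₂ ≥ t₁ such that y(t) ≤ k·π(t) for all t ≥ t₂. -/

import Mathlib

open Filter MeasureTheory Set

/-- Signed power: for exponents that are quotients of odd positive integers,
`x ^ p` preserves the sign of `x`. -/
noncomputable def opow (x p : ℝ) : ℝ := Real.sign x * |x| ^ p

/-- `L₁y = r₁ · (y')^α`. -/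
noncomputable def L1 (r₁ : ℝ → ℝ) (α : ℝ) (y : ℝ → ℝ) : ℝ → ℝ :=
  fun t => r₁ t * opow (deriv y t) α

/-- `L₂y = r₂ · ((L₁y)')^β`. -/
noncomputable def L2 (r₁ r₂ : ℝ → ℝ) (α β : ℝ) (y : ℝ → ℝ) : ℝ → ℝ :=
  fun t => r₂ t * opow (deriv (L1 r₁ α y) t) β

/-- `L₃y = (L₂y)'`. -/
noncomputable def L3 (r₁ r₂ : ℝ → ℝ) (α β : ℝ) (y : ℝ → ℝ) : ℝ → ℝ :=
  deriv (L2 r₁ r₂ α β y)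

/-- A real number which is a quotient of odd positive integers. -/
def OddQuotient (x : ℝ) : Prop :=
  ∃ m n : ℕ, Odd m ∧ Odd n ∧ 0 < m ∧ 0 < n ∧ x = (m : ℝ) / (n : ℝ)

/-- The standing hypotheses (H1)–(H4). -/
structure Hyp (t₀ α β γ : ℝ) (r₁ r₂ q σ : ℝ → ℝ) : Prop where
  ht₀ : 0 < t₀
  hα : OddQuotient α
  hβ : OddQuotient β
  hγ : OddQuotient γ
  hr₁c : ContinuousOn r₁ (Set.Ici t₀)
  hr₂c : ContinuousOn r₂ (Set.Ici t₀)
  hr₁p : ∀ t, t₀ ≤ t → 0 < r₁ t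
  hr₂p : ∀ t, t₀ ≤ t → 0 < r₂ t
  /-- noncanonical: `π₁(t₀) = ∫_{t₀}^∞ r₁^{-1/α} < ∞` -/
  hπ₁fin : IntegrableOn (fun s => r₁ s ^ (-(1/α))) (Set.Ici t₀)
  /-- noncanonical: `π₂(t₀) = ∫_{t₀}^∞ r₂^{-1/β} < ∞` -/
  hπ₂fin : IntegrableOn (fun s => r₂ s ^ (-(1/β))) (Set.Ici t₀)
  hqc : ContinuousOn q (Set.Ici t₀)
  hq0 : ∀ t, t₀ ≤ t → 0 ≤ q t
  /-- `q` does not vanish eventually -/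
  hqnv : ∀ T, t₀ ≤ T → ∃ t, T ≤ t ∧ q t ≠ 0
  hσd : DifferentiableOn ℝ σ (Set.Ici t₀)
  hσd' : ContinuousOn (deriv σ) (Set.Ici t₀)
  hσpos : ∀ t, t₀ ≤ t → 0 < σ t
  hσadv : ∀ t, t₀ ≤ t → t ≤ σ t
  hσmono : ∀ t, t₀ ≤ t → 0 ≤ deriv σ t

/-- `y` is a (nontrivial) solution of equation (E) on some half-line `[T,∞) ⊆ [t₀,∞)`. -/
def IsSolution (t₀ α β γ : ℝ) (r₁ r₂ q σ y : ℝ → ℝ) : Prop :=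
  ∃ T, t₀ ≤ T ∧
    ContinuousOn y (Set.Ici T) ∧
    DifferentiableOn ℝ y (Set.Ici T) ∧
    ContinuousOn (L1 r₁ α y) (Set.Ici T) ∧
    DifferentiableOn ℝ (L1 r₁ α y) (Set.Ici T) ∧
    ContinuousOn (L2 r₁ r₂ α β y) (Set.Ici T) ∧
    DifferentiableOn ℝ (L2 r₁ r₂ α β y) (Set.Ici T) ∧
    (∀ t, T ≤ t → L3 r₁ r₂ α β y t + q t * opow (y (σ t)) γ = 0) ∧
    (∀ T', T ≤ T' → ∃ t, T' ≤ t ∧ y t ≠ 0)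

/-- A function is oscillatory if it has arbitrarily large zeros. -/
def Oscillatory (y : ℝ → ℝ) : Prop := ∀ T : ℝ, ∃ t, T ≤ t ∧ y t = 0

/-- Equation (E) has property A: every solution is oscillatory or tends to `0`. -/
def PropertyA (t₀ α β γ : ℝ) (r₁ r₂ q σ : ℝ → ℝ) : Prop :=
  ∀ y : ℝ → ℝ, IsSolution t₀ α β γ r₁ r₂ q σ y →
    Oscillatory y ∨ Filter.Tendsto y Filter.atTop (nhds 0)

/-- Equation (E) is oscillatory: every solution is oscillatory. -/
def OscillatoryEq (t₀ α β γ : ℝ) (r₁ r₂ q σ : ℝ → ℝ) : Prop :=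
  ∀ y : ℝ → ℝ, IsSolution t₀ α β γ r₁ r₂ q σ y → Oscillatory y

/-- `π₁(t) = ∫_t^∞ r₁(s)^{-1/α} ds`. -/
noncomputable def pi1 (r₁ : ℝ → ℝ) (α : ℝ) (t : ℝ) : ℝ :=
  ∫ s in Set.Ioi t, r₁ s ^ (-(1/α))

/-- `π₂(t) = ∫_t^∞ r₂(s)^{-1/β} ds`. -/
noncomputable def pi2 (r₂ : ℝ → ℝ) (β : ℝ) (t : ℝ) : ℝ :=
  ∫ s in Set.Ioi t, r₂ s ^ (-(1/β))

/-- `π(t) = ∫_t^∞ r₁(s)^{-1/α} · π₂(s)^{1/α} ds`. -/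
noncomputable def piInf (r₁ r₂ : ℝ → ℝ) (α β : ℝ) (t : ℝ) : ℝ :=
  ∫ s in Set.Ioi t, r₁ s ^ (-(1/α)) * (pi2 r₂ β s) ^ (1/α)

/-- The class `S₁`: `y > 0, L₁y < 0, L₂y < 0, L₃y < 0` on `[t₁,∞)`. -/
def InS1 (r₁ r₂ : ℝ → ℝ) (α β : ℝ) (y : ℝ → ℝ) (t₁ : ℝ) : Prop :=
  ∀ t, t₁ ≤ t → 0 < y t ∧ L1 r₁ α y t < 0 ∧ L2 r₁ r₂ α β y t < 0 ∧ L3 r₁ r₂ α β y t < 0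

/-- The class `S₂`: `y > 0, L₁y < 0, L₂y > 0, L₃y < 0` on `[t₁,∞)`. -/
def InS2 (r₁ r₂ : ℝ → ℝ) (α β : ℝ) (y : ℝ → ℝ) (t₁ : ℝ) : Prop :=
  ∀ t, t₁ ≤ t → 0 < y t ∧ L1 r₁ α y t < 0 ∧ 0 < L2 r₁ r₂ α β y t ∧ L3 r₁ r₂ α β y t < 0

/-- The class `S₃`: `y > 0, L₁y > 0, L₂y > 0, L₃y < 0` on `[t₁,∞)`. -/
def InS3 (r₁ r₂ : ℝ → ℝ) (α β : ℝ) (y : ℝ → ℝ) (t₁ : ℝ) : Prop :=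
  ∀ t, t₁ ≤ t → 0 < y t ∧ 0 < L1 r₁ α y t ∧ 0 < L2 r₁ r₂ α β y t ∧ L3 r₁ r₂ α β y t < 0

/-- The class `S₄`: `y > 0, L₁y > 0, L₂y < 0, L₃y < 0` on `[t₁,∞)`. -/
def InS4 (r₁ r₂ : ℝ → ℝ) (α β : ℝ) (y : ℝ → ℝ) (t₁ : ℝ) : Prop :=
  ∀ t, t₁ ≤ t → 0 < y t ∧ 0 < L1 r₁ α y t ∧ L2 r₁ r₂ α β y t < 0 ∧ L3 r₁ r₂ α β y t < 0

/-!
Write `z = -L₁y` and `w = L₂y`; in `S₂` the functions `y`, `z`, `w` are positive and decreasing. If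
`c · π ≤ y` held near infinity for some `c > 0`, then `w' ≤ -c^γ · q · (π ∘ σ)^γ`, whose integral
diverges to `-∞`, contradicting `w > 0`. So `y` lies eventually above no multiple of `π`.

Integrating from `t` to `∞` transfers lower bounds through the system: `w ≥ ℓ` gives
`z ≥ ℓ^{1/β} · π₂`, which gives `y ≥ ℓ^{1/(αβ)} · π`. As this is impossible for `ℓ > 0`, and since
`π` and `π₂` tend to `0`, each of `w`, `z`, `y` tends to `0`. The boundary terms at infinity now
vanish, so upper bounds are transferred as well: `w ≤ (k^α)^β` gives `z ≤ k^α · π₂`, which gives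
`y ≤ k · π`.
-/

section TailIntegrals

variable {f f' φ : ℝ → ℝ}

lemma eventually_intervalIntegrable_of_integrableAtFilter (hφ : IntegrableAtFilter φ atTop) :
    ∀ᶠ a in atTop, ∀ b, a ≤ b → IntervalIntegrable φ volume a b := by
  obtain ⟨A, hA⟩ := integrableAtFilter_atTop_iff.1 hφ
  filter_upwards [eventually_ge_atTop A] with a ha b hab
  exact (hA.mono_set fun s hs => ha.trans (uIcc_of_le hab ▸ hs).1).intervalIntegrable

lemma intervalIntegrable_of_tendsto_integral_atTop {a b : ℝ}
    (h : Tendsto (fun t => ∫ s in a..t, φ s) atTop atTop) (hab : a ≤ b) :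
    IntervalIntegrable φ volume a b := by
  obtain ⟨u, hu, hbu⟩ := ((h.eventually_gt_atTop 0).and (eventually_ge_atTop b)).exists
  have hau : IntervalIntegrable φ volume a u := by
    -- A non-integrable `φ` would have integral `0` by convention.
    by_contra hnot
    exact hu.ne' (intervalIntegral.integral_undef hnot)
  exact hau.mono_set (uIcc_subset_uIcc_left (mem_uIcc_of_le hab hbu))

lemma eventually_integral_le_sub_of_hasDerivAt
    (hφ : ∀ᶠ a in atTop, ∀ b, a ≤ b → IntervalIntegrable φ volume a b)
    (hf : ∀ᶠ t in atTop, HasDerivAt f (f' t) t) (hle : ∀ᶠ t in atTop, f' t ≤ -φ t) :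
    ∀ᶠ a in atTop, ∀ b, a ≤ b → ∫ s in a..b, φ s ≤ f a - f b := by
  filter_upwards [hφ, eventually_forall_ge_atTop.2 hf, eventually_forall_ge_atTop.2 hle]
    with a hφa hfa hlea b hab
  have hint := (intervalIntegrable_iff_integrableOn_Icc_of_le hab).1 (hφa b hab)
  have hsub : f b - f a ≤ ∫ s in a..b, -φ s :=
    intervalIntegral.sub_le_integral_of_hasDeriv_right_of_le hab
      (fun s hs => (hfa s hs.1).continuousAt.continuousWithinAt)
      (fun s hs => (hfa s hs.1.le).hasDerivWithinAt) hint.neg (fun s hs => hlea s hs.1.le)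
  rw [intervalIntegral.integral_neg] at hsub
  linarith

lemma eventually_integral_Ioi_nonneg (hφ : ∀ᶠ t in atTop, 0 ≤ φ t) :
    ∀ᶠ t in atTop, 0 ≤ ∫ s in Ioi t, φ s := by
  filter_upwards [eventually_forall_ge_atTop.2 hφ] with t ht
  exact setIntegral_nonneg measurableSet_Ioi fun s hs => ht s (le_of_lt hs)

lemma eventually_integrableOn_Ioi (hφ : IntegrableAtFilter φ atTop) :
    ∀ᶠ t in atTop, IntegrableOn φ (Ioi t) := by
  obtain ⟨a, ha⟩ := integrableAtFilter_atTop_iff.1 hφ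
  filter_upwards [eventually_ge_atTop a] with t ht
  exact ha.mono_set (Ioi_subset_Ici ht)

lemma eventually_integral_Ioi_le_of_hasDerivAt (hφ : IntegrableAtFilter φ atTop)
    (hf : ∀ᶠ t in atTop, HasDerivAt f (f' t) t) (hle : ∀ᶠ t in atTop, f' t ≤ -φ t)
    (hf_nonneg : ∀ᶠ t in atTop, 0 ≤ f t) :
    ∀ᶠ t in atTop, ∫ s in Ioi t, φ s ≤ f t := by
  filter_upwards [eventually_integrableOn_Ioi hφ, eventually_integral_le_sub_of_hasDerivAt
    (eventually_intervalIntegrable_of_integrableAtFilter hφ) hf hle] with t hint hsub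
  refine le_of_tendsto (intervalIntegral_tendsto_integral_Ioi t hint tendsto_id) ?_
  filter_upwards [eventually_ge_atTop t, hf_nonneg] with u htu hu
  exact (hsub u htu).trans (sub_le_self _ hu)

lemma eventually_le_integral_Ioi_of_hasDerivAt (hφ : IntegrableAtFilter φ atTop)
    (hf : ∀ᶠ t in atTop, HasDerivAt f (f' t) t) (hle : ∀ᶠ t in atTop, -φ t ≤ f' t)
    (hf_lim : Tendsto f atTop (nhds 0)) :
    ∀ᶠ t in atTop, f t ≤ ∫ s in Ioi t, φ s := by
  have hneg : ∀ᶠ a in atTop, ∀ b, a ≤ b → ∫ s in a..b, -φ s ≤ -f a - -f b :=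
    eventually_integral_le_sub_of_hasDerivAt
      (eventually_intervalIntegrable_of_integrableAtFilter hφ.neg)
      (hf.mono fun t ht => ht.neg) (hle.mono fun t ht => neg_le_neg ht)
  filter_upwards [eventually_integrableOn_Ioi hφ, hneg] with t hint hsub
  have hlim : Tendsto (fun u => (∫ s in t..u, φ s) + f u) atTop (nhds (∫ s in Ioi t, φ s)) := by
    simpa only [add_zero, id] using
      (intervalIntegral_tendsto_integral_Ioi t hint tendsto_id).add hf_lim
  refine ge_of_tendsto hlim ?_
  filter_upwards [eventually_ge_atTop t] with u htu
  have := hsub u htu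
  rw [intervalIntegral.integral_neg] at this
  linarith

lemma not_tendsto_integral_atTop_of_hasDerivAt {a : ℝ}
    (hf : ∀ᶠ t in atTop, HasDerivAt f (f' t) t) (hle : ∀ᶠ t in atTop, f' t ≤ -φ t)
    (hf_nonneg : ∀ᶠ t in atTop, 0 ≤ f t) :
    ¬ Tendsto (fun t => ∫ s in a..t, φ s) atTop atTop := by
  intro hdiv
  have hint {b : ℝ} (hab : a ≤ b) : IntervalIntegrable φ volume a b :=
    intervalIntegrable_of_tendsto_integral_atTop hdiv hab
  have hint_tail : ∀ᶠ b in atTop, ∀ u, b ≤ u → IntervalIntegrable φ volume b u := by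
    filter_upwards [eventually_ge_atTop a] with b hab u hbu
    exact (hint hab).symm.trans (hint (hab.trans hbu))
  obtain ⟨b, hsub, hab⟩ := ((eventually_integral_le_sub_of_hasDerivAt hint_tail hf hle).and
    (eventually_ge_atTop a)).exists
  obtain ⟨u, ⟨hlarge, hu⟩, hbu⟩ := (((hdiv.eventually_gt_atTop ((∫ s in a..b, φ s) + f b)).and
    hf_nonneg).and (eventually_ge_atTop b)).exists
  have hsplit := intervalIntegral.integral_add_adjacent_intervals (hint hab)
    ((hint hab).symm.trans (hint (hab.trans hbu)))
  linarith [hsub u hbu]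

lemma tendsto_zero_of_not_eventually_const_le
    (hf : ∀ᶠ t in atTop, HasDerivAt f (f' t) t) (hf' : ∀ᶠ t in atTop, f' t ≤ 0)
    (hf_nonneg : ∀ᶠ t in atTop, 0 ≤ f t) (hc : ∀ c > 0, ¬ ∀ᶠ t in atTop, c ≤ f t) :
    Tendsto f atTop (nhds 0) := by
  have hanti : ∀ᶠ a in atTop, ∀ b, a ≤ b → f b ≤ f a := by
    simpa using eventually_integral_le_sub_of_hasDerivAt (φ := fun _ => 0)
      (.of_forall fun _ _ _ => intervalIntegrable_const) hf (by simpa using hf')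
  refine tendsto_order.2 ⟨fun c hc0 => hf_nonneg.mono fun t ht => hc0.trans_le ht,
    fun c hc0 => ?_⟩
  obtain ⟨b, hb, hb_anti⟩ := ((not_eventually.1 (hc c hc0)).and_eventually hanti).exists
  filter_upwards [eventually_ge_atTop b] with t ht
  exact (hb_anti t ht).trans_lt (not_le.1 hb)

lemma integrableAtFilter_mul_rpow_integral_Ioi {g : ℝ → ℝ} {p : ℝ} (hp : 0 ≤ p)
    (hg : IntegrableAtFilter g atTop) (hφ : IntegrableAtFilter φ atTop)
    (hφ_nonneg : ∀ᶠ t in atTop, 0 ≤ φ t) :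
    IntegrableAtFilter (fun t => g t * (∫ s in Ioi t, φ s) ^ p) atTop := by
  have htail_le_one : ∀ᶠ t in atTop, ∫ s in Ioi t, φ s ≤ 1 :=
    (tendsto_integral_Ioi_zero tendsto_id).eventually_le_const one_pos
  obtain ⟨a, ⟨⟨hga, hφa⟩, hφ0⟩, htail⟩ := ((((eventually_integrableOn_Ioi hg).and
    (eventually_integrableOn_Ioi hφ)).and (eventually_forall_ge_atTop.2 hφ_nonneg)).and
    (eventually_forall_ge_atTop.2
      ((eventually_integral_Ioi_nonneg hφ_nonneg).and htail_le_one))).exists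
  have hanti : AntitoneOn (fun t => ∫ s in Ioi t, φ s) (Ioi a) := by
    intro t ht u _ htu
    refine setIntegral_mono_set (hφa.mono_set (Ioi_subset_Ioi (le_of_lt ht))) ?_
      (Ioi_subset_Ioi htu).eventuallyLE
    exact ae_restrict_of_forall_mem measurableSet_Ioi fun s hs => hφ0 s (ht.trans hs).le
  refine ⟨Ioi a, Ioi_mem_atTop a, Integrable.mul_bdd (c := 1) hga
    ((aemeasurable_restrict_of_antitoneOn measurableSet_Ioi hanti).pow_const
      p).aestronglyMeasurable ?_⟩
  refine ae_restrict_of_forall_mem measurableSet_Ioi fun t ht => ?_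
  obtain ⟨h0, h1⟩ := htail t (le_of_lt ht)
  rw [Real.norm_of_nonneg (Real.rpow_nonneg h0 p)]
  exact Real.rpow_le_one h0 h1 hp

end TailIntegrals

section SignedPower

variable {x p r : ℝ}

lemma opow_of_pos (hx : 0 < x) : opow x p = x ^ p := by
  rw [opow, Real.sign_of_pos hx, abs_of_pos hx, one_mul]

lemma opow_neg (x p : ℝ) : opow (-x) p = -opow x p := by
  rw [opow, opow, Real.sign_neg, abs_neg, neg_mul]

lemma pos_of_opow_pos (h : 0 < opow x p) : 0 < x := by
  by_contra hx
  rcases (not_lt.1 hx).eq_or_lt with rfl | hneg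
  · simp [opow] at h
  · rw [← neg_neg x, opow_neg, opow_of_pos (neg_pos.2 hneg), neg_pos] at h
    exact h.not_ge (Real.rpow_nonneg (neg_pos.2 hneg).le p)

lemma eq_rpow_mul_rpow_of_mul_opow_pos (hr : 0 < r) (hp : 0 < p) (h : 0 < r * opow x p) :
    x = r ^ (-(1 / p)) * (r * opow x p) ^ (1 / p) := by
  have hx : 0 < x := pos_of_opow_pos (pos_of_mul_pos_right h hr.le)
  rw [opow_of_pos hx, Real.mul_rpow hr.le (by positivity), ← Real.rpow_mul hx.le,
    mul_one_div_cancel hp.ne', Real.rpow_one, ← mul_assoc, ← Real.rpow_add hr, neg_add_cancel,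
    Real.rpow_zero, one_mul]

lemma OddQuotient.pos (h : OddQuotient x) : 0 < x := by
  obtain ⟨m, n, -, -, hm, hn, rfl⟩ := h
  positivity

end SignedPower

/-- The coefficient `r` of the half-linear operator `r · (z')^p` is noncanonical: it is eventually
positive and `∫^∞ r(s)^{-1/p} ds < ∞`. -/
structure IsNoncanonical (r : ℝ → ℝ) (p : ℝ) : Prop where
  pos : ∀ᶠ t in atTop, 0 < r t
  integrableAtFilter : IntegrableAtFilter (fun s => r s ^ (-(1 / p))) atTop

section HalfLinear

variable {p c : ℝ} {r m v z : ℝ → ℝ}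

lemma eventually_rpow_mul_integral_Ioi_le (hp : 0 < p) (hc : 0 ≤ c)
    (hr : ∀ᶠ t in atTop, 0 < r t) (hm : ∀ᶠ t in atTop, 0 ≤ m t)
    (hint : IntegrableAtFilter (fun s => r s ^ (-(1 / p)) * m s ^ (1 / p)) atTop)
    (hz' : ∀ᶠ t in atTop, HasDerivAt z (-(r t ^ (-(1 / p)) * v t ^ (1 / p))) t)
    (hmv : ∀ᶠ t in atTop, c * m t ≤ v t) (hz : ∀ᶠ t in atTop, 0 ≤ z t) :
    ∀ᶠ t in atTop, c ^ (1 / p) * ∫ s in Ioi t, r s ^ (-(1 / p)) * m s ^ (1 / p) ≤ z t := by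
  simp only [← integral_const_mul]
  refine eventually_integral_Ioi_le_of_hasDerivAt (hint.smul (c ^ (1 / p))) hz' ?_ hz
  filter_upwards [hr, hm, hmv] with t hrt hmt hmvt
  refine neg_le_neg ?_
  calc c ^ (1 / p) * (r t ^ (-(1 / p)) * m t ^ (1 / p))
      = r t ^ (-(1 / p)) * (c * m t) ^ (1 / p) := by rw [Real.mul_rpow hc hmt]; ring
    _ ≤ r t ^ (-(1 / p)) * v t ^ (1 / p) := by gcongr

lemma eventually_le_rpow_mul_integral_Ioi (hp : 0 < p) (hc : 0 ≤ c)
    (hr : ∀ᶠ t in atTop, 0 < r t) (hm : ∀ᶠ t in atTop, 0 ≤ m t)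
    (hint : IntegrableAtFilter (fun s => r s ^ (-(1 / p)) * m s ^ (1 / p)) atTop)
    (hz' : ∀ᶠ t in atTop, HasDerivAt z (-(r t ^ (-(1 / p)) * v t ^ (1 / p))) t)
    (hv : ∀ᶠ t in atTop, 0 ≤ v t) (hvm : ∀ᶠ t in atTop, v t ≤ c * m t)
    (hz : Tendsto z atTop (nhds 0)) :
    ∀ᶠ t in atTop, z t ≤ c ^ (1 / p) * ∫ s in Ioi t, r s ^ (-(1 / p)) * m s ^ (1 / p) := by
  simp only [← integral_const_mul]
  refine eventually_le_integral_Ioi_of_hasDerivAt (hint.smul (c ^ (1 / p))) hz' ?_ hz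
  filter_upwards [hr, hm, hv, hvm] with t hrt hmt hvt hvmt
  refine neg_le_neg ?_
  calc r t ^ (-(1 / p)) * v t ^ (1 / p)
      ≤ r t ^ (-(1 / p)) * (c * m t) ^ (1 / p) := by gcongr
    _ = c ^ (1 / p) * (r t ^ (-(1 / p)) * m t ^ (1 / p)) := by rw [Real.mul_rpow hc hmt]; ring

lemma eventually_neg_rpow_mul_rpow_nonpos (hr : ∀ᶠ t in atTop, 0 < r t)
    (hv : ∀ᶠ t in atTop, 0 < v t) :
    ∀ᶠ t in atTop, -(r t ^ (-(1 / p)) * v t ^ (1 / p)) ≤ 0 := by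
  filter_upwards [hr, hv] with t hrt hvt
  rw [neg_nonpos]
  positivity

end HalfLinear

section NoncanonicalTails

variable {α β : ℝ} {r₁ r₂ : ℝ → ℝ}

lemma tendsto_pi2 (r₂ : ℝ → ℝ) (β : ℝ) : Tendsto (pi2 r₂ β) atTop (nhds 0) :=
  tendsto_integral_Ioi_zero tendsto_id

lemma tendsto_piInf (r₁ r₂ : ℝ → ℝ) (α β : ℝ) : Tendsto (piInf r₁ r₂ α β) atTop (nhds 0) :=
  tendsto_integral_Ioi_zero tendsto_id

lemma eventually_pi2_nonneg (hr₂ : ∀ᶠ t in atTop, 0 < r₂ t) :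
    ∀ᶠ t in atTop, 0 ≤ pi2 r₂ β t :=
  eventually_integral_Ioi_nonneg (hr₂.mono fun _ ht => Real.rpow_nonneg ht.le _)

lemma eventually_piInf_nonneg (hr₁ : ∀ᶠ t in atTop, 0 < r₁ t) (hr₂ : ∀ᶠ t in atTop, 0 < r₂ t) :
    ∀ᶠ t in atTop, 0 ≤ piInf r₁ r₂ α β t := by
  refine eventually_integral_Ioi_nonneg ?_
  filter_upwards [hr₁, eventually_pi2_nonneg hr₂] with t hr₁t hpi2
  positivity

lemma IsNoncanonical.integrableAtFilter_mul_pi2_rpow (hα : 0 < α) (hr₁ : IsNoncanonical r₁ α)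
    (hr₂ : IsNoncanonical r₂ β) :
    IntegrableAtFilter (fun s => r₁ s ^ (-(1 / α)) * pi2 r₂ β s ^ (1 / α)) atTop :=
  integrableAtFilter_mul_rpow_integral_Ioi (by positivity) hr₁.integrableAtFilter
    hr₂.integrableAtFilter (hr₂.pos.mono fun _ ht => Real.rpow_nonneg ht.le _)

end NoncanonicalTails

/-- Equation (E) as a first-order system along a solution `y` in `S₂`, near infinity. Here
`z = -L₁y` and `w = L₂y`, so that all three components are positive and decreasing. -/
structure IsS2Trajectory (α β γ : ℝ) (r₁ r₂ q σ y z w : ℝ → ℝ) : Prop where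
  y_pos : ∀ᶠ t in atTop, 0 < y t
  z_pos : ∀ᶠ t in atTop, 0 < z t
  w_pos : ∀ᶠ t in atTop, 0 < w t
  hasDerivAt_y : ∀ᶠ t in atTop, HasDerivAt y (-(r₁ t ^ (-(1 / α)) * z t ^ (1 / α))) t
  hasDerivAt_z : ∀ᶠ t in atTop, HasDerivAt z (-(r₂ t ^ (-(1 / β)) * w t ^ (1 / β))) t
  hasDerivAt_w : ∀ᶠ t in atTop, HasDerivAt w (-(q t * y (σ t) ^ γ)) t

lemma IsSolution.isS2Trajectory {t₀ t₁ α β γ : ℝ} {r₁ r₂ q σ y : ℝ → ℝ}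
    (hα : 0 < α) (hβ : 0 < β) (hr₁ : ∀ᶠ t in atTop, 0 < r₁ t) (hr₂ : ∀ᶠ t in atTop, 0 < r₂ t)
    (hσ : Tendsto σ atTop atTop) (hy : IsSolution t₀ α β γ r₁ r₂ q σ y)
    (hS2 : InS2 r₁ r₂ α β y t₁) :
    IsS2Trajectory α β γ r₁ r₂ q σ y (-L1 r₁ α y) (L2 r₁ r₂ α β y) := by
  obtain ⟨T, -, -, hy', -, hL1', -, hL2', heq, -⟩ := hy
  have hS2 : ∀ᶠ t in atTop, 0 < y t ∧ L1 r₁ α y t < 0 ∧ 0 < L2 r₁ r₂ α β y t :=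
    (eventually_ge_atTop t₁).mono fun t ht => ⟨(hS2 t ht).1, (hS2 t ht).2.1, (hS2 t ht).2.2.1⟩
  have hasDerivAt_deriv {f : ℝ → ℝ} (hf : DifferentiableOn ℝ f (Ici T)) :
      ∀ᶠ t in atTop, HasDerivAt f (deriv f t) t :=
    (eventually_gt_atTop T).mono fun t ht => (hf.differentiableAt (Ici_mem_nhds ht)).hasDerivAt
  refine ⟨hS2.mono fun t ht => ht.1, hS2.mono fun t ht => neg_pos.2 ht.2.1,
    hS2.mono fun t ht => ht.2.2, ?_, ?_, ?_⟩
  · filter_upwards [hS2, hr₁, hasDerivAt_deriv hy'] with t ht hr₁t hderiv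
    have hflux : r₁ t * opow (-deriv y t) α = -L1 r₁ α y t := by rw [opow_neg, mul_neg, L1]
    have hinv := eq_rpow_mul_rpow_of_mul_opow_pos hr₁t hα (hflux ▸ neg_pos.2 ht.2.1)
    rwa [Pi.neg_apply, ← hflux, ← hinv, neg_neg]
  · filter_upwards [hS2, hr₂, hasDerivAt_deriv hL1'] with t ht hr₂t hderiv
    exact eq_rpow_mul_rpow_of_mul_opow_pos hr₂t hβ ht.2.2 ▸ hderiv.neg
  · filter_upwards [hσ.eventually hS2, eventually_ge_atTop T, hasDerivAt_deriv hL2']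
      with t hσt hTt hderiv
    have hE : L3 r₁ r₂ α β y t = -(q t * y (σ t) ^ γ) := by
      rw [← opow_of_pos hσt.1]
      exact eq_neg_of_add_eq_zero_left (heq t hTt)
    exact hE ▸ hderiv

namespace IsS2Trajectory

variable {α β γ c : ℝ} {r₁ r₂ q σ y z w : ℝ → ℝ}

lemma not_eventually_mul_piInf_le {t₀ : ℝ} (h : IsS2Trajectory α β γ r₁ r₂ q σ y z w)
    (hγ : 0 ≤ γ) (hr₁ : ∀ᶠ t in atTop, 0 < r₁ t) (hr₂ : ∀ᶠ t in atTop, 0 < r₂ t)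
    (hq : ∀ᶠ t in atTop, 0 ≤ q t) (hσ : Tendsto σ atTop atTop)
    (hdiv : Tendsto (fun t => ∫ s in t₀..t, q s * piInf r₁ r₂ α β (σ s) ^ γ) atTop atTop)
    (hc : 0 < c) : ¬ ∀ᶠ t in atTop, c * piInf r₁ r₂ α β t ≤ y t := by
  intro hy
  have hle : ∀ᶠ t in atTop,
      -(q t * y (σ t) ^ γ) ≤ -(c ^ γ * (q t * piInf r₁ r₂ α β (σ t) ^ γ)) := by
    filter_upwards [hq, hσ.eventually hy, hσ.eventually (eventually_piInf_nonneg hr₁ hr₂)]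
      with t hqt hyt hpi
    refine neg_le_neg ?_
    calc c ^ γ * (q t * piInf r₁ r₂ α β (σ t) ^ γ)
        = q t * (c * piInf r₁ r₂ α β (σ t)) ^ γ := by rw [Real.mul_rpow hc.le hpi]; ring
      _ ≤ q t * y (σ t) ^ γ := by gcongr
  refine not_tendsto_integral_atTop_of_hasDerivAt (a := t₀) h.hasDerivAt_w hle
    (h.w_pos.mono fun _ => le_of_lt) ?_
  simpa only [intervalIntegral.integral_const_mul] using
    hdiv.const_mul_atTop (Real.rpow_pos_of_pos hc γ)

lemma not_eventually_mul_pi2_le (h : IsS2Trajectory α β γ r₁ r₂ q σ y z w) (hα : 0 < α)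
    (hr₁ : IsNoncanonical r₁ α) (hr₂ : IsNoncanonical r₂ β)
    (hy : ∀ c > 0, ¬ ∀ᶠ t in atTop, c * piInf r₁ r₂ α β t ≤ y t) (hc : 0 < c) :
    ¬ ∀ᶠ t in atTop, c * pi2 r₂ β t ≤ z t := fun hz =>
  hy (c ^ (1 / α)) (by positivity) <|
    eventually_rpow_mul_integral_Ioi_le hα hc.le hr₁.pos (eventually_pi2_nonneg hr₂.pos)
      (hr₁.integrableAtFilter_mul_pi2_rpow hα hr₂) h.hasDerivAt_y hz
      (h.y_pos.mono fun _ => le_of_lt)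

lemma tendsto_y (h : IsS2Trajectory α β γ r₁ r₂ q σ y z w) (hr₁ : ∀ᶠ t in atTop, 0 < r₁ t)
    (hy : ∀ c > 0, ¬ ∀ᶠ t in atTop, c * piInf r₁ r₂ α β t ≤ y t) :
    Tendsto y atTop (nhds 0) := by
  refine tendsto_zero_of_not_eventually_const_le h.hasDerivAt_y
    (eventually_neg_rpow_mul_rpow_nonpos hr₁ h.z_pos) (h.y_pos.mono fun _ => le_of_lt)
    fun c hc hcy => hy 1 one_pos ?_
  filter_upwards [hcy, (tendsto_piInf r₁ r₂ α β).eventually_le_const hc] with t hyt hpi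
  linarith

lemma tendsto_z (h : IsS2Trajectory α β γ r₁ r₂ q σ y z w) (hα : 0 < α)
    (hr₁ : IsNoncanonical r₁ α) (hr₂ : IsNoncanonical r₂ β)
    (hy : ∀ c > 0, ¬ ∀ᶠ t in atTop, c * piInf r₁ r₂ α β t ≤ y t) :
    Tendsto z atTop (nhds 0) := by
  refine tendsto_zero_of_not_eventually_const_le h.hasDerivAt_z
    (eventually_neg_rpow_mul_rpow_nonpos hr₂.pos h.w_pos) (h.z_pos.mono fun _ => le_of_lt)
    fun c hc hcz => h.not_eventually_mul_pi2_le hα hr₁ hr₂ hy one_pos ?_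
  filter_upwards [hcz, (tendsto_pi2 r₂ β).eventually_le_const hc] with t hzt hpi
  linarith

lemma tendsto_w (h : IsS2Trajectory α β γ r₁ r₂ q σ y z w) (hα : 0 < α) (hβ : 0 < β)
    (hr₁ : IsNoncanonical r₁ α) (hr₂ : IsNoncanonical r₂ β) (hq : ∀ᶠ t in atTop, 0 ≤ q t)
    (hσ : Tendsto σ atTop atTop)
    (hy : ∀ c > 0, ¬ ∀ᶠ t in atTop, c * piInf r₁ r₂ α β t ≤ y t) :
    Tendsto w atTop (nhds 0) := by
  have hw' : ∀ᶠ t in atTop, -(q t * y (σ t) ^ γ) ≤ 0 := by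
    filter_upwards [hq, hσ.eventually h.y_pos] with t hqt hyt
    rw [neg_nonpos]
    positivity
  refine tendsto_zero_of_not_eventually_const_le h.hasDerivAt_w hw'
    (h.w_pos.mono fun _ => le_of_lt) fun c hc hcw =>
      h.not_eventually_mul_pi2_le (c := c ^ (1 / β)) hα hr₁ hr₂ hy (by positivity) ?_
  have hz := eventually_rpow_mul_integral_Ioi_le (m := 1) hβ hc.le hr₂.pos (by simp)
    (by simpa using hr₂.integrableAtFilter) h.hasDerivAt_z (by simpa using hcw)
    (h.z_pos.mono fun _ => le_of_lt)
  simpa [pi2] using hz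

theorem eventually_le_mul_piInf (h : IsS2Trajectory α β γ r₁ r₂ q σ y z w) (hα : 0 < α)
    (hβ : 0 < β) (hr₁ : IsNoncanonical r₁ α) (hr₂ : IsNoncanonical r₂ β)
    (hq : ∀ᶠ t in atTop, 0 ≤ q t) (hσ : Tendsto σ atTop atTop)
    (hy : ∀ c > 0, ¬ ∀ᶠ t in atTop, c * piInf r₁ r₂ α β t ≤ y t) {k : ℝ} (hk : 0 < k) :
    ∀ᶠ t in atTop, y t ≤ k * piInf r₁ r₂ α β t := by
  have hw : ∀ᶠ t in atTop, w t ≤ (k ^ α) ^ β :=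
    (h.tendsto_w hα hβ hr₁ hr₂ hq hσ hy).eventually_le_const (by positivity)
  have hz : ∀ᶠ t in atTop, z t ≤ k ^ α * pi2 r₂ β t := by
    have hz := eventually_le_rpow_mul_integral_Ioi (m := 1) (c := (k ^ α) ^ β) hβ (by positivity)
      hr₂.pos (by simp) (by simpa using hr₂.integrableAtFilter) h.hasDerivAt_z
      (h.w_pos.mono fun _ => le_of_lt) (by simpa using hw) (h.tendsto_z hα hr₁ hr₂ hy)
    rw [one_div, Real.rpow_rpow_inv (by positivity) hβ.ne'] at hz
    simpa [pi2] using hz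
  have hy_le := eventually_le_rpow_mul_integral_Ioi (c := k ^ α) hα (by positivity) hr₁.pos
    (eventually_pi2_nonneg hr₂.pos) (hr₁.integrableAtFilter_mul_pi2_rpow hα hr₂) h.hasDerivAt_y
    (h.z_pos.mono fun _ => le_of_lt) hz (h.tendsto_y hr₁.pos hy)
  have hroot : (k ^ α) ^ (1 / α) = k := by rw [one_div, Real.rpow_rpow_inv hk.le hα.ne']
  rwa [hroot] at hy_le

end IsS2Trajectory

theorem S2_upper_bound_general {t₀ α β γ t₁ : ℝ} {r₁ r₂ q σ y : ℝ → ℝ}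
    (hα : 0 < α) (hβ : 0 < β) (hγ : 0 ≤ γ)
    (hr₁ : IsNoncanonical r₁ α) (hr₂ : IsNoncanonical r₂ β)
    (hq : ∀ᶠ t in atTop, 0 ≤ q t) (hσ : Tendsto σ atTop atTop)
    (hy : IsSolution t₀ α β γ r₁ r₂ q σ y) (hS2 : InS2 r₁ r₂ α β y t₁)
    (hdiv : Tendsto (fun t => ∫ s in t₀..t, q s * piInf r₁ r₂ α β (σ s) ^ γ) atTop atTop)
    (k : ℝ) (hk : 0 < k) :
    ∃ t₂, t₁ ≤ t₂ ∧ ∀ t, t₂ ≤ t → y t ≤ k * piInf r₁ r₂ α β t := by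
  have htraj := hy.isS2Trajectory hα hβ hr₁.pos hr₂.pos hσ hS2
  have hy_le : ∀ᶠ t in atTop, y t ≤ k * piInf r₁ r₂ α β t :=
    htraj.eventually_le_mul_piInf hα hβ hr₁ hr₂ hq hσ
      (fun _ hc => htraj.not_eventually_mul_piInf_le hγ hr₁.pos hr₂.pos hq hσ hdiv hc) hk
  obtain ⟨t₂, ht₁₂, ht₂⟩ := ((eventually_ge_atTop t₁).and
    (eventually_forall_ge_atTop.2 hy_le)).exists
  exact ⟨t₂, ht₁₂, ht₂⟩

section StandingHypotheses

variable {t₀ α β γ : ℝ} {r₁ r₂ q σ : ℝ → ℝ}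

lemma Hyp.isNoncanonical_r₁ (H : Hyp t₀ α β γ r₁ r₂ q σ) : IsNoncanonical r₁ α where
  pos := (eventually_ge_atTop t₀).mono H.hr₁p
  integrableAtFilter := ⟨Ici t₀, Ici_mem_atTop t₀, H.hπ₁fin⟩

lemma Hyp.isNoncanonical_r₂ (H : Hyp t₀ α β γ r₁ r₂ q σ) : IsNoncanonical r₂ β where
  pos := (eventually_ge_atTop t₀).mono H.hr₂p
  integrableAtFilter := ⟨Ici t₀, Ici_mem_atTop t₀, H.hπ₂fin⟩

lemma Hyp.tendsto_σ (H : Hyp t₀ α β γ r₁ r₂ q σ) : Tendsto σ atTop atTop :=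
  tendsto_atTop_mono' atTop ((eventually_ge_atTop t₀).mono H.hσadv) tendsto_id

end StandingHypotheses

theorem S2_upper_bound (t₀ α β γ t₁ : ℝ) (r₁ r₂ q σ y : ℝ → ℝ)
    (H : Hyp t₀ α β γ r₁ r₂ q σ)
    (hy : IsSolution t₀ α β γ r₁ r₂ q σ y)
    (ht₁ : t₀ ≤ t₁)
    (hS2 : InS2 r₁ r₂ α β y t₁)
    (hdiv : Filter.Tendsto (fun t => ∫ s in t₀..t, q s * (piInf r₁ r₂ α β (σ s)) ^ γ)
      Filter.atTop Filter.atTop) :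
    ∀ k : ℝ, 0 < k → ∃ t₂, t₁ ≤ t₂ ∧ ∀ t, t₂ ≤ t → y t ≤ k * piInf r₁ r₂ α β t :=
  S2_upper_bound_general H.hα.pos H.hβ.pos H.hγ.pos.le H.isNoncanonical_r₁ H.isNoncanonical_r₂
    ((eventually_ge_atTop t₀).mono H.hq0) H.tendsto_σ hy hS2 hdiv
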